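/- Let E and F be nonempty convex sets in ℝⁿ such that every vector u ∈ ℝⁿ is uniquely expressible as u = y + z with y ∈ E, z ∈ F, and y · z = 0 (uniqueness meaning: if u = y₁ + z₁ = y₂ + z₂ with y₁, y₂ ∈ E, z₁, z₂ ∈ F, y₁ · z₁ = 0 and y₂ · z₂ = 0, then y₁ = y₂ and z₁ = z₂). Then E and F are both convex cones: for every λ ≥ 0, λu ∈ E whenever u ∈ E, and λu ∈ F whenever u ∈ F. -/

import Mathlib

open RealInnerProductSpace Pointwise

/-- The (negative) polar set of `X`. -/
def polarSet {n : ℕ} (X : Set (EuclideanSpace ℝ (Fin n))) : Set (EuclideanSpace ℝ (Fin n)) :=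
  {x | ∀ e ∈ X, ⟪x, e⟫ ≤ 0}

/-!
If `u ∈ E` and `l ≥ 1`, decompose `l • u = y + z`. Shrinking by `l⁻¹` towards `0` stays inside `E`
and `F` and keeps orthogonality, so `u = l⁻¹ • y + l⁻¹ • z` is the decomposition of `u`. But
`u = u + 0` is one as well, so uniqueness gives `u = l⁻¹ • y`, that is `l • u = y ∈ E`.
-/

variable {V : Type*} [NormedAddCommGroup V] [InnerProductSpace ℝ V] {E F : Set V}

/-- `u = y + z` is an orthogonal decomposition of `u` with components `y ∈ E` and `z ∈ F`. -/
structure IsOrthogonalDecomposition (E F : Set V) (u y z : V) : Prop where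
  left_mem : y ∈ E
  right_mem : z ∈ F
  inner_eq_zero : ⟪y, z⟫ = 0
  eq_add : u = y + z

namespace IsOrthogonalDecomposition

variable {u y z : V}

theorem symm (h : IsOrthogonalDecomposition E F u y z) : IsOrthogonalDecomposition F E u z y where
  left_mem := h.right_mem
  right_mem := h.left_mem
  inner_eq_zero := inner_eq_zero_symm.mp h.inner_eq_zero
  eq_add := h.eq_add.trans (add_comm y z)

theorem self_zero (hu : u ∈ E) (hF : (0 : V) ∈ F) : IsOrthogonalDecomposition E F u u 0 where
  left_mem := hu
  right_mem := hF
  inner_eq_zero := inner_zero_right u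
  eq_add := (add_zero u).symm

theorem left_eq_zero (h : IsOrthogonalDecomposition E F 0 y z) : y = 0 := by
  have hyy : ⟪y, y⟫ = 0 := by
    simpa only [inner_zero_right, inner_add_right, h.inner_eq_zero, add_zero]
      using (congrArg (inner ℝ y) h.eq_add).symm
  exact inner_self_eq_zero.mp hyy

theorem smul (h : IsOrthogonalDecomposition E F u y z) (hE : StarConvex ℝ 0 E)
    (hF : StarConvex ℝ 0 F) {c : ℝ} (hc₀ : 0 ≤ c) (hc₁ : c ≤ 1) :
    IsOrthogonalDecomposition E F (c • u) (c • y) (c • z) where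
  left_mem := hE.smul_mem h.left_mem hc₀ hc₁
  right_mem := hF.smul_mem h.right_mem hc₀ hc₁
  inner_eq_zero := by
    rw [real_inner_smul_left, real_inner_smul_right, h.inner_eq_zero, mul_zero, mul_zero]
  eq_add := by rw [h.eq_add, smul_add]

end IsOrthogonalDecomposition

/-- Every vector has exactly one orthogonal decomposition with components in `E` and `F`; for a
closed convex cone `E` in a Hilbert space and its polar cone `F` this is Moreau's theorem. -/
structure HasUniqueOrthogonalDecompositions (E F : Set V) : Prop where
  exists_decomposition : ∀ u, ∃ y z, IsOrthogonalDecomposition E F u y z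
  unique : ∀ {u y₁ z₁ y₂ z₂}, IsOrthogonalDecomposition E F u y₁ z₁ →
    IsOrthogonalDecomposition E F u y₂ z₂ → y₁ = y₂ ∧ z₁ = z₂

namespace HasUniqueOrthogonalDecompositions

theorem symm (h : HasUniqueOrthogonalDecompositions E F) :
    HasUniqueOrthogonalDecompositions F E where
  exists_decomposition u :=
    let ⟨y, z, hyz⟩ := h.exists_decomposition u
    ⟨z, y, hyz.symm⟩
  unique h₁ h₂ := (h.unique h₁.symm h₂.symm).symm

theorem zero_mem_left (h : HasUniqueOrthogonalDecompositions E F) : (0 : V) ∈ E := by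
  obtain ⟨y, z, hyz⟩ := h.exists_decomposition 0
  exact hyz.left_eq_zero ▸ hyz.left_mem

theorem smul_mem_left (h : HasUniqueOrthogonalDecompositions E F) (hE : StarConvex ℝ 0 E)
    (hF : StarConvex ℝ 0 F) {l : ℝ} (hl : 0 ≤ l) {u : V} (hu : u ∈ E) : l • u ∈ E := by
  rcases le_total l 1 with hl₁ | hl₁
  · exact hE.smul_mem hu hl hl₁
  have hl₀ : l ≠ 0 := (zero_lt_one.trans_le hl₁).ne'
  obtain ⟨y, z, hyz⟩ := h.exists_decomposition (l • u)
  have hshrunk : IsOrthogonalDecomposition E F u (l⁻¹ • y) (l⁻¹ • z) := by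
    simpa only [inv_smul_smul₀ hl₀]
      using hyz.smul hE hF (inv_nonneg.mpr hl) (inv_le_one_of_one_le₀ hl₁)
  have hu_eq : u = l⁻¹ • y := (h.unique (.self_zero hu h.symm.zero_mem_left) hshrunk).1
  rw [hu_eq, smul_inv_smul₀ hl₀]
  exact hyz.left_mem

end HasUniqueOrthogonalDecompositions

theorem cones_of_unique_orthogonal_decomposition_general
    (h : HasUniqueOrthogonalDecompositions E F) (hE : StarConvex ℝ 0 E) (hF : StarConvex ℝ 0 F) :
    (∀ l : ℝ, 0 ≤ l → ∀ u ∈ E, l • u ∈ E) ∧ (∀ l : ℝ, 0 ≤ l → ∀ u ∈ F, l • u ∈ F) :=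
  ⟨fun _ hl _ hu ↦ h.smul_mem_left hE hF hl hu, fun _ hl _ hu ↦ h.symm.smul_mem_left hF hE hl hu⟩

theorem cones_of_unique_orthogonal_decomposition
    (n : ℕ) (E F : Set (EuclideanSpace ℝ (Fin n)))
    (hEne : E.Nonempty) (hEconv : Convex ℝ E)
    (hFne : F.Nonempty) (hFconv : Convex ℝ F)
(hex : ∀ u : EuclideanSpace ℝ (Fin n), ∃ y ∈ E, ∃ z ∈ F, ⟪y, z⟫ = 0 ∧ u = y + z)
    (huniq : ∀ u y₁ z₁ y₂ z₂ : EuclideanSpace ℝ (Fin n),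
      y₁ ∈ E → z₁ ∈ F → y₂ ∈ E → z₂ ∈ F →
      ⟪y₁, z₁⟫ = 0 → ⟪y₂, z₂⟫ = 0 →
      u = y₁ + z₁ → u = y₂ + z₂ → y₁ = y₂ ∧ z₁ = z₂) :
    (∀ l : ℝ, 0 ≤ l → ∀ u ∈ E, l • u ∈ E) ∧
      (∀ l : ℝ, 0 ≤ l → ∀ u ∈ F, l • u ∈ F) := by
  have h : HasUniqueOrthogonalDecompositions E F :=
    ⟨fun u ↦ let ⟨y, hy, z, hz, hyz, hu⟩ := hex u; ⟨y, z, hy, hz, hyz, hu⟩,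
      fun ⟨hy₁, hz₁, h₁, hu₁⟩ ⟨hy₂, hz₂, h₂, hu₂⟩ ↦
        huniq _ _ _ _ _ hy₁ hz₁ hy₂ hz₂ h₁ h₂ hu₁ hu₂⟩
  exact cones_of_unique_orthogonal_decomposition_general h
    (hEconv.starConvex h.zero_mem_left) (hFconv.starConvex h.symm.zero_mem_left)
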